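/- arXiv:1603.01403 — 2 statements merged into one kernel-verified Lean document; each statement's English description precedes it below -/
import Mathlib

section
/- Suppose T maps Dθ into itself, T is skew-adjoint on V (⟨TX, Y⟩ = -⟨X, TY⟩ for all X, Y), and ‖TX‖ = |cos θ| · ‖X‖ for every X ∈ Dθ (constant Wirtinger angle θ). Then T²X = -cos²θ · X for every X ∈ Dθ. (Equation (17): the defining identity of a slant distribution with slant angle θ.) -/
open RealInnerProductSpace

/-! Put `c = cos² θ`. Since `T` scales norms on `Dθ` by `|cos θ|` and preserves `Dθ`,
`‖T X‖² = c ‖X‖²` and `‖T² X‖² = c² ‖X‖²`, while skew-adjointness gives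
`⟪T² X, X⟫ = -‖T X‖² = -c ‖X‖²`. Expanding,
`‖T² X + c X‖² = c² ‖X‖² - 2 c² ‖X‖² + c² ‖X‖² = 0`. -/

/-- Equation (17): if `T` maps `Dθ` into itself, is skew-adjoint, and has constant
Wirtinger angle `θ` on `Dθ` (`‖T X‖ = |cos θ| * ‖X‖`), then `T² X = -cos²θ • X` on `Dθ`. -/
theorem slant_identity_of_constant_angle
    {V : Type*} [NormedAddCommGroup V] [InnerProductSpace ℝ V] [FiniteDimensional ℝ V]
    (T : V →ₗ[ℝ] V) (Dθ : Submodule ℝ V) (θ : ℝ)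
    (hmap : ∀ x ∈ Dθ, T x ∈ Dθ)
    (hskew : ∀ x y : V, ⟪T x, y⟫ = -⟪x, T y⟫)
    (hangle : ∀ x ∈ Dθ, ‖T x‖ = |Real.cos θ| * ‖x‖) :
    ∀ x ∈ Dθ, T (T x) = -(Real.cos θ) ^ 2 • x := by
  intro x hx
  have h1 : ‖T x‖ ^ 2 = Real.cos θ ^ 2 * ‖x‖ ^ 2 := by
    rw [hangle x hx, mul_pow, sq_abs]
  have h2 : ‖T (T x)‖ ^ 2 = Real.cos θ ^ 2 * ‖T x‖ ^ 2 := by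
    rw [hangle _ (hmap x hx), mul_pow, sq_abs]
  have h3 : ⟪T (T x), x⟫ = -‖T x‖ ^ 2 := by
    rw [hskew, real_inner_self_eq_norm_sq]
  have h4 : ‖T (T x) + Real.cos θ ^ 2 • x‖ ^ 2 = 0 := by
    rw [norm_add_sq_real, real_inner_smul_right, norm_smul, mul_pow, Real.norm_eq_abs, sq_abs,
      h2, h3, h1]
    ring
  rw [neg_smul]
  exact eq_neg_of_add_eq_zero_left (norm_eq_zero.mp (pow_eq_zero_iff two_ne_zero |>.mp h4))
end

section
/- Let D be a subspace of E and h ∈ E a vector such that for all Z, W ∈ D one has ⟨Z, W⟩ · ⟨Z, h⟩ = ‖Z‖² · ⟨W, h⟩. Then either h is orthogonal to D (⟨W, h⟩ = 0 for all W ∈ D), or D has dimension at most 1. (Algebraic core of Theorem 4.1: for a totally umbilical hemi-slant submanifold of a nearly Kaehler manifold, equation g(Z,W)g(Z,JH) = ‖Z‖²g(W,JH) on D⊥ forces either JH ⊥ D⊥ — so H ⊥ J(D⊥), covering the cases H = 0 and H ∈ μ — or dim D⊥ = 1.) -/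
open RealInnerProductSpace

/-- Algebraic core of Theorem 4.1: if `D` is a subspace of a real inner product space `E`
and `h ∈ E` satisfies `⟪Z, W⟫ * ⟪Z, h⟫ = ‖Z‖² * ⟪W, h⟫` for all `Z, W ∈ D`, then either
`h` is orthogonal to `D`, or `D` has dimension at most `1`. -/
theorem umbilical_dichotomy
    {E : Type*} [NormedAddCommGroup E] [InnerProductSpace ℝ E]
    (D : Submodule ℝ E) (h : E)
    (hyp : ∀ Z ∈ D, ∀ W ∈ D, ⟪Z, W⟫ * ⟪Z, h⟫ = ‖Z‖ ^ 2 * ⟪W, h⟫) :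
    (∀ W ∈ D, ⟪W, h⟫ = 0) ∨ Module.rank ℝ D ≤ 1 := by
  by_cases horth : ∀ W ∈ D, ⟪W, h⟫ = 0
  · exact Or.inl horth
  right
  push Not at horth
  obtain ⟨W, hW, hne⟩ := horth
  rw [rank_le_one_iff]
  refine ⟨⟨W, hW⟩, fun ⟨Z, hZ⟩ => ⟨⟪Z, h⟫ / ⟪W, h⟫, Subtype.ext ?_⟩⟩
  -- `U` is the part of `Z` left after removing the multiple of `W` with the same pairing
  -- against `h`, so `⟪U, h⟫ = 0`; the identity for the pair `(U, W)` then forces `U = 0`.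
  set U := Z - (⟪Z, h⟫ / ⟪W, h⟫) • W with hU
  have hUD : U ∈ D := D.sub_mem hZ (D.smul_mem _ hW)
  have hUh : ⟪U, h⟫ = 0 := by
    rw [hU, inner_sub_left, real_inner_smul_left, div_mul_cancel₀ _ hne, sub_self]
  have hU0 : U = 0 := by
    have := hyp U hUD W hW
    rw [hUh, mul_zero] at this
    simpa [hne] using this.symm
  exact (sub_eq_zero.mp hU0).symm
end
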